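/- The Bernoulli–Laplace chain satisfies detailed balance with respect to the hypergeometric distribution π: for all i, j ∈ {0,...,N_w}, T_{ij}·π_j = T_{ji}·π_i, where π_i = C(N_w,i)·C(N−N_w, N1−i)/C(N,N1). -/

import Mathlib

/-!
The chain only moves between neighbouring states, so detailed balance is trivial except along an
edge `k — k + 1`, where it reads `p_k π_k = q_{k+1} π_{k+1}` (`pBL_mul_piBL`). After cancelling
`N1 * N2` and `C(N, N1)`, this is the product of two instances of the absorption identity
`C(n, m + 1) (m + 1) = C(n, m) (n - m)`: one for the factor `C(Nw, k)` and one for the factor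
`C(Nb, N1 - k)`. The differences agree with truncated natural subtraction, as
`k ≤ Nw` and `N1 - k ≤ N1 ≤ Nb`, the last inequality being `Nw ≤ N2`.
-/

open Finset

noncomputable section

/-- Up-transition probability `p_j` of the BL model. -/
def pBL (N1 N2 Nw : ℕ) (j : ℕ) : ℝ :=
  ((N1 : ℝ) - j) * ((Nw : ℝ) - j) / ((N1 : ℝ) * N2)

/-- Down-transition probability `q_j` of the BL model. -/
def qBL (N1 N2 Nb : ℕ) (j : ℕ) : ℝ :=
  (j : ℝ) * ((Nb : ℝ) - N1 + j) / ((N1 : ℝ) * N2)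

/-- The Bernoulli–Laplace transition matrix `T`. -/
def TBL (N1 N2 Nw Nb : ℕ) : Matrix (Fin (Nw + 1)) (Fin (Nw + 1)) ℝ :=
  fun i j =>
    if (i : ℕ) = (j : ℕ) + 1 then pBL N1 N2 Nw j
    else if (i : ℕ) + 1 = (j : ℕ) then qBL N1 N2 Nb j
    else if (i : ℕ) = (j : ℕ) then 1 - pBL N1 N2 Nw j - qBL N1 N2 Nb j
    else 0

/-- The hypergeometric stationary distribution `π_i = C(Nw,i) C(N-Nw,N1-i) / C(N,N1)`. -/
def piBL (N1 Nw N : ℕ) (i : ℕ) : ℝ :=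
  (Nat.choose Nw i : ℝ) * (Nat.choose (N - Nw) (N1 - i) : ℝ) / (Nat.choose N N1 : ℝ)

/-- The absorption identity for binomial coefficients, with the subtraction taken in `ℝ`. -/
lemma choose_succ_mul_real {n m : ℕ} (h : m ≤ n) :
    (n.choose (m + 1) : ℝ) * ((m : ℝ) + 1) = n.choose m * ((n : ℝ) - m) := by
  have key := congrArg (Nat.cast : ℕ → ℝ) (Nat.choose_succ_right_eq n m)
  push_cast [Nat.cast_sub h] at key
  exact key

/-- Detailed balance along the edge `k — k + 1`. -/
lemma pBL_mul_piBL {N1 N2 Nw Nb N k : ℕ} (hN : N = N1 + N2) (hwb : Nw + Nb = N)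
    (hw1 : Nw ≤ N1) (hw2 : Nw ≤ N2) (hk : k + 1 ≤ Nw) :
    pBL N1 N2 Nw k * piBL N1 Nw N k = qBL N1 N2 Nb (k + 1) * piBL N1 Nw N (k + 1) := by
  obtain ⟨m, rfl⟩ : ∃ m, N1 = m + (k + 1) := ⟨N1 - (k + 1), by omega⟩
  have h1 : N - Nw = Nb := by omega
  have h2 : m + (k + 1) - k = m + 1 := by omega
  have h3 : m + (k + 1) - (k + 1) = m := by omega
  have hA := choose_succ_mul_real (n := Nw) (m := k) (by omega)
  have hB := choose_succ_mul_real (n := Nb) (m := m) (by omega)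
  simp only [pBL, qBL, piBL, h1, h2, h3, div_mul_div_comm]
  congr 1
  push_cast
  linear_combination ((Nw : ℝ) - k) * Nw.choose k * hB
    - ((Nb : ℝ) - m) * Nb.choose m * hA

/-- The BL chain satisfies detailed balance with respect to the hypergeometric
distribution: `T_{ij} π_j = T_{ji} π_i`. -/
theorem BL_detailed_balance
    (N1 N2 Nw Nb N : ℕ)
    (hN1 : 1 ≤ N1) (hN2 : 1 ≤ N2) (hN : N = N1 + N2) (hwb : Nw + Nb = N)
    (hw1 : Nw ≤ N1) (hw2 : Nw ≤ N2)
    (i j : Fin (Nw + 1)) :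
    TBL N1 N2 Nw Nb i j * piBL N1 Nw N j = TBL N1 N2 Nw Nb j i * piBL N1 Nw N i := by
  have edge : ∀ k : ℕ, k + 1 ≤ Nw → _ := fun k hk =>
    pBL_mul_piBL (k := k) hN hwb hw1 hw2 hk
  have hi := i.isLt
  have hj := j.isLt
  rcases eq_or_ne (i : ℕ) j with hij | hij
  · rw [Fin.ext hij]
  by_cases up : (i : ℕ) = j + 1
  · have e := edge j (by omega)
    simp only [TBL, up, if_true]
    rw [if_neg (by omega)]
    exact e
  by_cases down : (j : ℕ) = i + 1
  · have e := edge i (by omega)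
    simp only [TBL, down, if_true]
    rw [if_neg (by omega)]
    exact e.symm
  · have h1 : (i : ℕ) + 1 ≠ j := fun h => down h.symm
    have h2 : (j : ℕ) + 1 ≠ i := fun h => up h.symm
    simp only [TBL, up, down, h1, h2, hij, hij.symm, if_false, zero_mul]
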